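/- Let ℓ be a positive integer. There exist constants c, C > 0 such that for all integers m ≥ 0: c · 2^{m/ℓ} Γ(m/ℓ + 1) ≤ Γ((m+1)/ℓ)² · Σ_{k=0}^{m} 1/(Γ((k+1)/ℓ) Γ((m−k+1)/ℓ)) ≤ C · 2^{m/ℓ} Γ(m/ℓ + 1). -/

import Mathlib

lemma gs_low (ℓ : ℕ) (hℓ : 0 < ℓ) (f : ℕ → ℝ) (hf : ∀ n, 0 < f n)
    (h : ∀ n, f n ≤ f (n + ℓ)) : ∃ c : ℝ, 0 < c ∧ ∀ n, c ≤ f n := by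
  obtain ⟨i, hi, hmin⟩ := Finset.exists_min_image (Finset.range ℓ) f ⟨0, by simpa using hℓ⟩
  refine ⟨f i, hf i, fun n => ?_⟩
  induction n using Nat.strong_induction_on with
  | _ n ih =>
    by_cases hn : n < ℓ
    · exact hmin n (by simpa using hn)
    · have h1 := ih (n - ℓ) (by omega)
      have h2 := h (n - ℓ)
      rw [Nat.sub_add_cancel (by omega)] at h2
      linarith

lemma gs_fin (N : ℕ) (f : ℕ → ℝ) (hf : ∀ n, 0 < f n) (c : ℝ) (hc : 0 < c)
    (h : ∀ n, c ≤ f (n + N)) : ∃ c : ℝ, 0 < c ∧ ∀ n, c ≤ f n := by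
  obtain ⟨i, hi, hmin⟩ := Finset.exists_min_image (Finset.range (N+1)) f ⟨0, by simp⟩
  refine ⟨min c (f i), lt_min hc (hf i), fun n => ?_⟩
  by_cases hn : n < N
  · exact (min_le_right _ _).trans (hmin n (by simp; omega))
  · have h1 := h (n - N)
    rw [Nat.sub_add_cancel (by omega)] at h1
    exact (min_le_left _ _).trans h1

/-- The reciprocal Gamma function at `j / ℓ`. -/
noncomputable def gsG (ℓ j : ℕ) : ℝ := 1 / Real.Gamma ((j : ℝ) / ℓ)

lemma gsG_nonneg (ℓ j : ℕ) : 0 ≤ gsG ℓ j := by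
  unfold gsG
  have := Real.Gamma_nonneg_of_nonneg (s := (j : ℝ) / ℓ) (by positivity)
  positivity

lemma gsG_pos (ℓ j : ℕ) (hℓ : 0 < ℓ) : 0 < gsG ℓ (j + 1) := by
  unfold gsG
  have := Real.Gamma_pos_of_pos (s := ((j + 1 : ℕ) : ℝ) / ℓ) (by positivity)
  positivity

lemma gsG_rec (ℓ j : ℕ) (hℓ : 0 < ℓ) :
    ((j : ℝ) + 1) / ℓ * gsG ℓ (j + 1 + ℓ) = gsG ℓ (j + 1) := by
  unfold gsG
  have hl : (0 : ℝ) < ℓ := by exact_mod_cast hℓ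
  have h0 : (0 : ℝ) < ((j + 1 : ℕ) : ℝ) / ℓ := by positivity
  have h1 : ((j + 1 + ℓ : ℕ) : ℝ) / ℓ = ((j + 1 : ℕ) : ℝ) / ℓ + 1 := by
    push_cast; field_simp
  have h2 := Real.Gamma_pos_of_pos h0
  rw [h1, Real.Gamma_add_one h0.ne']
  push_cast at *
  field_simp

/-- Convolution sums of `gsG` shifted by `d`. -/
noncomputable def gsS (ℓ d m : ℕ) : ℝ :=
  ∑ k ∈ Finset.range (m + 1), gsG ℓ (k + 1 + d) * gsG ℓ (m - k + 1 + d)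

lemma gsS_pos (ℓ d m : ℕ) (hℓ : 0 < ℓ) : 0 < gsS ℓ d m := by
  unfold gsS
  apply Finset.sum_pos
  · intro k _
    rw [add_right_comm, add_right_comm (m - k)]
    exact mul_pos (gsG_pos _ _ hℓ) (gsG_pos _ _ hℓ)
  · exact ⟨0, by simp⟩

lemma gsS_sym (ℓ d m : ℕ) (e : ℝ) :
    ((m : ℝ) + 2 + 2 * e) / ℓ * gsS ℓ d m = 2 * ∑ k ∈ Finset.range (m + 1),
      ((k : ℝ) + 1 + e) / ℓ * (gsG ℓ (k + 1 + d) * gsG ℓ (m - k + 1 + d)) := by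
  have h1 := Finset.sum_range_reflect (fun k : ℕ =>
    ((k : ℝ) + 1 + e) / ℓ * (gsG ℓ (k + 1 + d) * gsG ℓ (m - k + 1 + d))) (m + 1)
  rw [two_mul (Finset.sum _ _)]
  nth_rewrite 1 [← h1]
  rw [← Finset.sum_add_distrib, gsS, Finset.mul_sum]
  apply Finset.sum_congr rfl
  intro k hk
  have hk : k ≤ m := by simp at hk; omega
  have e1 : m + 1 - 1 - k = m - k := by omega
  have e2 : m - (m - k) = k := by omega
  simp only [e1, e2]
  rw [Nat.cast_sub hk]
  ring

lemma gsS_up (ℓ m : ℕ) (hℓ : 0 < ℓ) :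
    ((m : ℝ) + 2 - ℓ) / ℓ * gsS ℓ 0 (m + ℓ) ≤ 2 * gsS ℓ 0 m := by
  have hl : (0 : ℝ) < ℓ := by exact_mod_cast hℓ
  have h := gsS_sym ℓ 0 (m + ℓ) (-ℓ)
  have e : (((m + ℓ : ℕ) : ℝ) + 2 + 2 * (-ℓ)) = (m : ℝ) + 2 - ℓ := by push_cast; ring
  rw [e] at h
  rw [h]
  apply mul_le_mul_of_nonneg_left _ (by norm_num)
  rw [show m + ℓ + 1 = ℓ + (m + 1) by ring, Finset.sum_range_add]
  have h1 : ∑ k ∈ Finset.range ℓ, ((k : ℝ) + 1 + -(ℓ : ℝ)) / ℓ *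
      (gsG ℓ (k + 1 + 0) * gsG ℓ (m + ℓ - k + 1 + 0)) ≤ 0 := by
    apply Finset.sum_nonpos
    intro k hk
    have hk : ((k + 1 : ℕ) : ℝ) ≤ ℓ := by
      have := Finset.mem_range.1 hk
      exact_mod_cast this
    push_cast at hk
    apply mul_nonpos_of_nonpos_of_nonneg
    · apply div_nonpos_of_nonpos_of_nonneg <;> linarith
    · exact mul_nonneg (gsG_nonneg _ _) (gsG_nonneg _ _)
  have h2 : ∑ k ∈ Finset.range (m + 1), (((ℓ + k : ℕ) : ℝ) + 1 + -(ℓ : ℝ)) / ℓ *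
      (gsG ℓ (ℓ + k + 1 + 0) * gsG ℓ (m + ℓ - (ℓ + k) + 1 + 0)) = gsS ℓ 0 m := by
    unfold gsS
    apply Finset.sum_congr rfl
    intro k hk
    have e1 : m + ℓ - (ℓ + k) = m - k := by omega
    have e2 : ℓ + k + 1 + 0 = k + 1 + ℓ := by omega
    have e3 : (((ℓ + k : ℕ) : ℝ) + 1 + -(ℓ : ℝ)) = k + 1 := by push_cast; ring
    rw [e1, e2, e3, ← mul_assoc, gsG_rec _ _ hℓ, add_zero (k+1)]
  linarith

lemma gsS_lo (ℓ n : ℕ) (hℓ : 0 < ℓ) :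
    2 * gsS ℓ ℓ n ≤ ((n : ℝ) + ℓ + 2) / ℓ * gsS ℓ ℓ (n + ℓ) := by
  have h := gsS_sym ℓ ℓ (n + ℓ) 0
  have e : (((n + ℓ : ℕ) : ℝ) + 2 + 2 * 0) = (n : ℝ) + ℓ + 2 := by push_cast; ring
  rw [e] at h
  rw [h]
  apply mul_le_mul_of_nonneg_left _ (by norm_num)
  rw [show n + ℓ + 1 = ℓ + (n + 1) by ring, Finset.sum_range_add]
  have h1 : 0 ≤ ∑ k ∈ Finset.range ℓ, ((k : ℝ) + 1 + 0) / ℓ *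
      (gsG ℓ (k + 1 + ℓ) * gsG ℓ (n + ℓ - k + 1 + ℓ)) := by
    apply Finset.sum_nonneg
    intro k hk
    have := gsG_nonneg ℓ (k + 1 + ℓ)
    have := gsG_nonneg ℓ (n + ℓ - k + 1 + ℓ)
    positivity
  have h2 : ∑ k ∈ Finset.range (n + 1), (((ℓ + k : ℕ) : ℝ) + 1 + 0) / ℓ *
      (gsG ℓ (ℓ + k + 1 + ℓ) * gsG ℓ (n + ℓ - (ℓ + k) + 1 + ℓ)) = gsS ℓ ℓ n := by
    unfold gsS
    apply Finset.sum_congr rfl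
    intro k hk
    have e1 : n + ℓ - (ℓ + k) = n - k := by omega
    rw [e1, ← mul_assoc, add_zero, gsG_rec _ _ hℓ, show ℓ + k + 1 = k + 1 + ℓ by ring]
  linarith

lemma gsS_shift (ℓ n : ℕ) : gsS ℓ ℓ n ≤ gsS ℓ 0 (n + 2 * ℓ) := by
  have hnn : ∀ a b, 0 ≤ gsG ℓ a * gsG ℓ b := fun a b =>
    mul_nonneg (gsG_nonneg _ _) (gsG_nonneg _ _)
  unfold gsS
  rw [show n + 2 * ℓ + 1 = ℓ + ((n + 1) + ℓ) by ring, Finset.sum_range_add _ ℓ (n + 1 + ℓ),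
    Finset.sum_range_add _ (n + 1) ℓ]
  have h1 : 0 ≤ ∑ k ∈ Finset.range ℓ, gsG ℓ (k + 1 + 0) * gsG ℓ (n + 2 * ℓ - k + 1 + 0) :=
    Finset.sum_nonneg fun _ _ => hnn _ _
  have h3 : 0 ≤ ∑ k ∈ Finset.range ℓ, gsG ℓ (ℓ + (n + 1 + k) + 1 + 0) *
      gsG ℓ (n + 2 * ℓ - (ℓ + (n + 1 + k)) + 1 + 0) :=
    Finset.sum_nonneg fun _ _ => hnn _ _
  have h2 : ∑ k ∈ Finset.range (n + 1), gsG ℓ (k + 1 + ℓ) * gsG ℓ (n - k + 1 + ℓ) =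
      ∑ k ∈ Finset.range (n + 1), gsG ℓ (ℓ + k + 1 + 0) *
        gsG ℓ (n + 2 * ℓ - (ℓ + k) + 1 + 0) := by
    apply Finset.sum_congr rfl
    intro k hk
    have := Finset.mem_range.1 hk
    congr 2 <;> omega
  linarith

/-- The normalising factor. -/
noncomputable def gsB (ℓ m : ℕ) : ℝ :=
  Real.Gamma (((m : ℝ) + 1) / ℓ) ^ 2 / (2 ^ ((m : ℝ) / ℓ) * Real.Gamma ((m : ℝ) / ℓ + 1))

lemma gsB_pos (ℓ m : ℕ) (hℓ : 0 < ℓ) : 0 < gsB ℓ m := by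
  unfold gsB
  have := Real.Gamma_pos_of_pos (s := ((m : ℝ) + 1) / ℓ) (by positivity)
  have := Real.Gamma_pos_of_pos (s := (m : ℝ) / ℓ + 1) (by positivity)
  positivity

lemma gsB_rec (ℓ m : ℕ) (hℓ : 0 < ℓ) :
    gsB ℓ (m + ℓ) = gsB ℓ m * ((((m : ℝ) + 1) / ℓ) ^ 2 / (2 * ((m : ℝ) / ℓ + 1))) := by
  unfold gsB
  have hl : (0 : ℝ) < ℓ := by exact_mod_cast hℓ
  have h1 : (0 : ℝ) < ((m : ℝ) + 1) / ℓ := by positivity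
  have h2 : (0 : ℝ) < (m : ℝ) / ℓ + 1 := by positivity
  have e1 : (((m + ℓ : ℕ) : ℝ) + 1) / ℓ = ((m : ℝ) + 1) / ℓ + 1 := by
    push_cast; field_simp; ring
  have e2 : ((m + ℓ : ℕ) : ℝ) / ℓ = (m : ℝ) / ℓ + 1 := by
    push_cast; field_simp
  rw [e1, e2, Real.Gamma_add_one h1.ne', Real.Gamma_add_one h2.ne',
    Real.rpow_add (by norm_num : (0:ℝ) < 2), Real.rpow_one]
  have := Real.Gamma_pos_of_pos h1
  have := Real.Gamma_pos_of_pos h2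
  have : (0:ℝ) < 2 ^ ((m : ℝ) / ℓ) := by positivity
  generalize Real.Gamma (((m : ℝ) + 1) / ℓ) = g1 at *
  generalize Real.Gamma ((m : ℝ) / ℓ + 1) = g2 at *
  generalize (2 : ℝ) ^ ((m : ℝ) / ℓ) = g3 at *
  field_simp

lemma gs_lower (ℓ : ℕ) (hℓ : 0 < ℓ) :
    ∃ c : ℝ, 0 < c ∧ ∀ m, c ≤ gsB ℓ m * gsS ℓ 0 m := by
  have hl : (0 : ℝ) < ℓ := by exact_mod_cast hℓ
  obtain ⟨c, hc, h⟩ := gs_low ℓ hℓ (fun n => gsB ℓ (n + 2 * ℓ) * gsS ℓ ℓ n)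
    (fun n => mul_pos (gsB_pos _ _ hℓ) (gsS_pos _ _ _ hℓ)) (by
      intro n
      have hB := gsB_pos ℓ (n + 2 * ℓ) hℓ
      have hU := gsS_lo ℓ n hℓ
      have hU0 := gsS_pos ℓ ℓ (n + ℓ) hℓ
      rw [show n + ℓ + 2 * ℓ = n + 2 * ℓ + ℓ by ring, gsB_rec _ _ hℓ, mul_assoc]
      apply mul_le_mul_of_nonneg_left _ hB.le
      have key : ((n : ℝ) + ℓ + 2) / ℓ / 2 ≤
          (((n + 2 * ℓ : ℕ) : ℝ) + 1) / ℓ * ((((n + 2 * ℓ : ℕ) : ℝ) + 1) / ℓ) /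
            (2 * (((n + 2 * ℓ : ℕ) : ℝ) / ℓ + 1)) := by
        push_cast
        have hn : (0 : ℝ) ≤ n := by positivity
        rw [div_div, div_mul_div_comm, div_div, div_le_div_iff₀ (by positivity) (by positivity)]
        field_simp
        nlinarith [sq_nonneg ((ℓ : ℝ) - 1)]
      rw [pow_two]
      have := mul_le_mul_of_nonneg_right key hU0.le
      linarith)
  refine gs_fin (2 * ℓ) _ (fun n => mul_pos (gsB_pos _ _ hℓ) (gsS_pos _ _ _ hℓ)) c hc ?_
  intro n
  exact (h n).trans (mul_le_mul_of_nonneg_left (gsS_shift ℓ n) (gsB_pos _ _ hℓ).le)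

lemma gs_logconv (x y : ℝ) (hx : 0 < x) (hy : 0 < y) :
    Real.Gamma ((x + y) / 2) ^ 2 ≤ Real.Gamma x * Real.Gamma y := by
  have h := Real.Gamma_mul_add_mul_le_rpow_Gamma_mul_rpow_Gamma hx hy
    (a := 1/2) (b := 1/2) (by norm_num) (by norm_num) (by norm_num)
  have gx := Real.Gamma_pos_of_pos hx
  have gy := Real.Gamma_pos_of_pos hy
  have g := Real.Gamma_pos_of_pos (s := (x + y) / 2) (by positivity)
  rw [show 1 / 2 * x + 1 / 2 * y = (x + y) / 2 by ring, ← Real.sqrt_eq_rpow,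
    ← Real.sqrt_eq_rpow, ← Real.sqrt_mul gx.le] at h
  exact (Real.le_sqrt g.le (by positivity)).1 h

lemma gs_upper (ℓ : ℕ) (hℓ : 0 < ℓ) :
    ∃ c : ℝ, 0 < c ∧ ∀ m, c ≤ 1 / (gsB ℓ m * gsS ℓ 0 m) := by
  have hl : (0 : ℝ) < ℓ := by exact_mod_cast hℓ
  have hg : ∀ n : ℕ, 0 < Real.Gamma (((n : ℝ) + 2) / ℓ) := fun n =>
    Real.Gamma_pos_of_pos (by positivity)
  have hS := fun n => gsS_pos ℓ 0 n hℓ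
  have h2 : ∀ n : ℕ, (0 : ℝ) < 2 ^ ((n : ℝ) / ℓ + 1) := fun n => by positivity
  obtain ⟨c, hc, h⟩ := gs_low ℓ hℓ
    (fun n => 2 ^ ((n : ℝ) / ℓ + 1) / (Real.Gamma (((n : ℝ) + 2) / ℓ) * gsS ℓ 0 (n + ℓ)))
    (fun n => div_pos (h2 n) (mul_pos (hg n) (hS _))) (by
      intro n
      have e1 : (((n + ℓ : ℕ) : ℝ) + 2) / ℓ = ((n : ℝ) + 2) / ℓ + 1 := by
        push_cast; field_simp; ring
      have e2 : ((n + ℓ : ℕ) : ℝ) / ℓ + 1 = ((n : ℝ) / ℓ + 1) + 1 := by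
        push_cast; field_simp
      have hu := gsS_up ℓ (n + ℓ) hℓ
      have e3 : (((n + ℓ : ℕ) : ℝ) + 2 - ℓ) / ℓ = ((n : ℝ) + 2) / ℓ := by
        push_cast; ring
      rw [e3] at hu
      simp only [e1, e2]
      have hp : (0 : ℝ) < ((n : ℝ) + 2) / ℓ := by positivity
      rw [Real.Gamma_add_one hp.ne', Real.rpow_add (by norm_num : (0:ℝ) < 2) ((n : ℝ) / ℓ + 1) 1, Real.rpow_one]
      rw [div_le_div_iff₀ (mul_pos (hg n) (hS _)) (mul_pos (mul_pos hp (hg n)) (hS _))]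
      have := mul_le_mul_of_nonneg_left hu (mul_pos (h2 n) (hg n)).le
      linarith)
  refine gs_fin ℓ _ (fun n => one_div_pos.2 (mul_pos (gsB_pos _ _ hℓ) (hS _))) c hc ?_
  intro n
  refine (h n).trans ?_
  have hB := gsB_pos ℓ (n + ℓ) hℓ
  have e2 : ((n + ℓ : ℕ) : ℝ) / ℓ = ((n : ℝ) / ℓ + 1) := by
    push_cast; field_simp
  have key : gsB ℓ (n + ℓ) ≤ Real.Gamma (((n : ℝ) + 2) / ℓ) / 2 ^ ((n : ℝ) / ℓ + 1) := by
    unfold gsB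
    rw [e2]
    have hq : (0 : ℝ) < (n : ℝ) / ℓ + 1 + 1 := by positivity
    have hl := gs_logconv (((n : ℝ) + 2) / ℓ) ((n : ℝ) / ℓ + 1 + 1) (by positivity) hq
    have e4 : (((n : ℝ) + 2) / ℓ + ((n : ℝ) / ℓ + 1 + 1)) / 2 = (((n + ℓ : ℕ) : ℝ) + 1) / ℓ := by
      push_cast; field_simp; ring
    rw [e4] at hl
    have hq' := Real.Gamma_pos_of_pos hq
    rw [div_le_div_iff₀ (mul_pos (h2 n) hq') (h2 n)]
    have := mul_le_mul_of_nonneg_right hl (h2 n).le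
    linarith
  rw [div_le_div_iff₀ (mul_pos (hg n) (hS _)) (mul_pos hB (hS _))]
  rw [le_div_iff₀ (h2 n)] at key
  have := mul_le_mul_of_nonneg_right key (hS (n + ℓ)).le
  linarith


theorem gamma_sum_estimate_all_m (ℓ : ℕ) (hℓ : 0 < ℓ) :
    ∃ c C : ℝ, 0 < c ∧ 0 < C ∧
      ∀ m : ℕ,
        c * 2 ^ ((m : ℝ) / (ℓ : ℝ)) * Real.Gamma ((m : ℝ) / (ℓ : ℝ) + 1) ≤
          Real.Gamma (((m : ℝ) + 1) / (ℓ : ℝ)) ^ 2 *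
            (∑ k ∈ Finset.range (m + 1),
              1 / (Real.Gamma (((k : ℝ) + 1) / (ℓ : ℝ)) *
                Real.Gamma (((m : ℝ) - (k : ℝ) + 1) / (ℓ : ℝ)))) ∧
        Real.Gamma (((m : ℝ) + 1) / (ℓ : ℝ)) ^ 2 *
            (∑ k ∈ Finset.range (m + 1),
              1 / (Real.Gamma (((k : ℝ) + 1) / (ℓ : ℝ)) *
                Real.Gamma (((m : ℝ) - (k : ℝ) + 1) / (ℓ : ℝ)))) ≤
          C * 2 ^ ((m : ℝ) / (ℓ : ℝ)) * Real.Gamma ((m : ℝ) / (ℓ : ℝ) + 1) := by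

  obtain ⟨c, hc, h1⟩ := gs_lower ℓ hℓ
  obtain ⟨d, hd, h2⟩ := gs_upper ℓ hℓ
  refine ⟨c, 1 / d, hc, one_div_pos.2 hd, fun m => ?_⟩
  have hsum : (∑ k ∈ Finset.range (m + 1),
              1 / (Real.Gamma (((k : ℝ) + 1) / (ℓ : ℝ)) *
                Real.Gamma (((m : ℝ) - (k : ℝ) + 1) / (ℓ : ℝ)))) = gsS ℓ 0 m := by
    unfold gsS gsG
    apply Finset.sum_congr rfl
    intro k hk
    have hk : k ≤ m := by simp at hk; omega
    simp only [add_zero, Nat.cast_add, Nat.cast_one, Nat.cast_sub hk]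
    rw [one_div_mul_one_div]
  rw [hsum]
  have hS := gsS_pos ℓ 0 m hℓ
  have hB := gsB_pos ℓ m hℓ
  have hD : 0 < (2 : ℝ) ^ ((m : ℝ) / ℓ) * Real.Gamma ((m : ℝ) / ℓ + 1) :=
    mul_pos (by positivity) (Real.Gamma_pos_of_pos (by positivity))
  have e : Real.Gamma (((m : ℝ) + 1) / (ℓ : ℝ)) ^ 2 * gsS ℓ 0 m =
      gsB ℓ m * gsS ℓ 0 m * (2 ^ ((m : ℝ) / ℓ) * Real.Gamma ((m : ℝ) / ℓ + 1)) := by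
    unfold gsB
    rw [mul_right_comm, div_mul_cancel₀ _ hD.ne']
  rw [e, mul_assoc c, mul_assoc (1 / d)]
  refine ⟨mul_le_mul_of_nonneg_right (h1 m) hD.le, mul_le_mul_of_nonneg_right ?_ hD.le⟩
  exact (le_one_div hd (mul_pos hB hS)).1 (h2 m)
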